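/- Let A be a Hopf algebra over a field k with comultiplication Δ, counit ε and antipode S, and let Φ ∈ A⊗A⊗A be an invertible element satisfying: (id⊗ε⊗id)(Φ) = 1⊗1; (Δ⊗id)(Δ(a)) = Φ·(id⊗Δ)(Δ(a))·Φ^{-1} for all a ∈ A; and the 3-cocycle identity (Δ⊗id⊗id)(Φ)·(id⊗id⊗Δ)(Φ) = (Φ⊗1)·(id⊗Δ⊗id)(Φ)·(1⊗Φ). Define γ = Σ S(Φ')·Φ''·S(Φ''') and assume γ is invertible. Then (A, Φ, S, α = 1, β = γ^{-1}) is a quasi-Hopf algebra: for all a ∈ A, writing Δ(a) = Σ a'⊗a'', one has Σ S(a')·a'' = ε(a)·1 and Σ a'·γ^{-1}·S(a'') = ε(a)·γ^{-1}; and writing Φ = Σ Φ'⊗Φ''⊗Φ''' and Φ^{-1} = Σ \barΦ'⊗\barΦ''⊗\barΦ''', one has Σ S(Φ')·Φ''·γ^{-1}·S(Φ''') = 1 and Σ \barΦ'·γ^{-1}·S(\barΦ'')·\barΦ''' = 1. -/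

import Mathlib

open TensorProduct

set_option maxHeartbeats 1000000
set_option synthInstance.maxHeartbeats 400000

noncomputable section

/-- Generators of the restricted quantum group `Q = \bar U_i sl(2)`. -/
inductive QGen : Type
  | E | F | K | Kinv
deriving DecidableEq

/-- The free algebra on the generators. -/
abbrev FA : Type := FreeAlgebra ℂ QGen

def ιE : FA := FreeAlgebra.ι ℂ QGen.E
def ιF : FA := FreeAlgebra.ι ℂ QGen.F
def ιK : FA := FreeAlgebra.ι ℂ QGen.K
def ιKi : FA := FreeAlgebra.ι ℂ QGen.Kinv

/-- Defining relations of `\bar U_i sl(2)` (at `q = i`, i.e. `p = 2`). -/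
inductive QRel : FA → FA → Prop
  | KKi : QRel (ιK * ιKi) 1
  | KiK : QRel (ιKi * ιK) 1
  | KEKi : QRel (ιK * ιE * ιKi) (-ιE)
  | KFKi : QRel (ιK * ιF * ιKi) (-ιF)
  | EF : QRel (ιE * ιF - ιF * ιE) ((2 * Complex.I)⁻¹ • (ιK - ιKi))
  | Esq : QRel (ιE ^ 2) 0
  | Fsq : QRel (ιF ^ 2) 0
  | K4 : QRel (ιK ^ 4) 1

/-- The restricted quantum group `\bar U_i sl(2)`: the quotient of the free algebra
by the two-sided ideal generated by the defining relations. -/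
abbrev Q : Type := RingQuot QRel

def gE : Q := RingQuot.mkAlgHom ℂ QRel ιE
def gF : Q := RingQuot.mkAlgHom ℂ QRel ιF
def gK : Q := RingQuot.mkAlgHom ℂ QRel ιK
def gKi : Q := RingQuot.mkAlgHom ℂ QRel ιKi

section Gadgets

variable (k : Type) [Field k] (A : Type) [Ring A] [Algebra k A]

abbrev TP2 : Type := A ⊗[k] A
abbrev TP3 : Type := A ⊗[k] (A ⊗[k] A)
abbrev TP4 : Type := A ⊗[k] (A ⊗[k] (A ⊗[k] A))

/-- Multiplication `a ⊗ b ↦ a * b`. -/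
def mulA : TP2 k A →ₗ[k] A := LinearMap.mul' k A

/-- Tensor flip `a ⊗ b ↦ b ⊗ a`. -/
def flipA : TP2 k A →ₗ[k] TP2 k A := (TensorProduct.comm k A A).toLinearMap

/-- `a ↦ a ⊗ 1`. -/
def lTen : A →ₗ[k] TP2 k A := (TensorProduct.mk k A A).flip 1

/-- `a ↦ 1 ⊗ a`. -/
def rTen : A →ₗ[k] TP2 k A := TensorProduct.mk k A A 1

/-- `a ⊗ b ↦ a ⊗ b ⊗ 1`. -/
def emb12 : TP2 k A →ₗ[k] TP3 k A := TensorProduct.map LinearMap.id (lTen k A)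

/-- `a ⊗ b ↦ a ⊗ 1 ⊗ b`. -/
def emb13 : TP2 k A →ₗ[k] TP3 k A := TensorProduct.map LinearMap.id (rTen k A)

/-- `a ⊗ b ↦ 1 ⊗ a ⊗ b`. -/
def emb23 : TP2 k A →ₗ[k] TP3 k A := TensorProduct.mk k A (TP2 k A) 1

/-- `a ⊗ b ⊗ c ↦ a ⊗ c ⊗ b`. -/
def perm132 : TP3 k A →ₗ[k] TP3 k A := TensorProduct.map LinearMap.id (flipA k A)

/-- `a ⊗ b ⊗ c ↦ b ⊗ c ⊗ a`. -/
def perm231 : TP3 k A →ₗ[k] TP3 k A :=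
  (TensorProduct.assoc k A A A).toLinearMap ∘ₗ (TensorProduct.comm k A (TP2 k A)).toLinearMap

/-- `a ⊗ b ⊗ c ↦ c ⊗ a ⊗ b`. -/
def perm312 : TP3 k A →ₗ[k] TP3 k A :=
  (TensorProduct.comm k (TP2 k A) A).toLinearMap ∘ₗ (TensorProduct.assoc k A A A).symm.toLinearMap

/-- `a ⊗ b ⊗ c ↦ b ⊗ a ⊗ c`. -/
def perm213 : TP3 k A →ₗ[k] TP3 k A :=
  (TensorProduct.assoc k A A A).toLinearMap ∘ₗ
    (TensorProduct.map (flipA k A) LinearMap.id) ∘ₗ (TensorProduct.assoc k A A A).symm.toLinearMap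

variable {k A}

/-- `(Δ ⊗ id)` on two tensor factors, landing in the triple tensor product. -/
def copL (D : A →ₐ[k] TP2 k A) : TP2 k A →ₗ[k] TP3 k A :=
  (TensorProduct.assoc k A A A).toLinearMap ∘ₗ TensorProduct.map D.toLinearMap LinearMap.id

/-- `(id ⊗ Δ)` on two tensor factors. -/
def copR (D : A →ₐ[k] TP2 k A) : TP2 k A →ₗ[k] TP3 k A :=
  TensorProduct.map LinearMap.id D.toLinearMap

/-- `(ε ⊗ id) : A ⊗ A → A`. -/
def cuL (ce : A →ₐ[k] k) : TP2 k A →ₗ[k] A :=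
  (TensorProduct.lid k A).toLinearMap ∘ₗ TensorProduct.map ce.toLinearMap LinearMap.id

/-- `(id ⊗ ε) : A ⊗ A → A`. -/
def cuR (ce : A →ₐ[k] k) : TP2 k A →ₗ[k] A :=
  (TensorProduct.rid k A).toLinearMap ∘ₗ TensorProduct.map LinearMap.id ce.toLinearMap

/-- `(id ⊗ ε ⊗ id) : A ⊗ A ⊗ A → A ⊗ A`. -/
def cuMid (ce : A →ₐ[k] k) : TP3 k A →ₗ[k] TP2 k A :=
  TensorProduct.map LinearMap.id (cuL ce)

/-- `(Δ ⊗ id ⊗ id)`. -/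
def cop4_1 (D : A →ₐ[k] TP2 k A) : TP3 k A →ₗ[k] TP4 k A :=
  (TensorProduct.assoc k A A (TP2 k A)).toLinearMap ∘ₗ TensorProduct.map D.toLinearMap LinearMap.id

/-- `(id ⊗ Δ ⊗ id)`. -/
def cop4_2 (D : A →ₐ[k] TP2 k A) : TP3 k A →ₗ[k] TP4 k A :=
  TensorProduct.map LinearMap.id (copL D)

/-- `(id ⊗ id ⊗ Δ)`. -/
def cop4_3 (D : A →ₐ[k] TP2 k A) : TP3 k A →ₗ[k] TP4 k A :=
  TensorProduct.map LinearMap.id (copR D)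

/-- `a ⊗ b ⊗ c ↦ a ⊗ b ⊗ c ⊗ 1`, i.e. `Φ ↦ Φ ⊗ 1`. -/
def pad4 : TP3 k A →ₗ[k] TP4 k A :=
  TensorProduct.map LinearMap.id (TensorProduct.map LinearMap.id (lTen k A))

/-- `a ⊗ b ⊗ c ↦ f(a) * g(b) * h(c)`. -/
def tmap3 (f g h : A →ₗ[k] A) : TP3 k A →ₗ[k] A :=
  mulA k A ∘ₗ TensorProduct.map f (mulA k A ∘ₗ TensorProduct.map g h)

/-- `a ⊗ b ↦ S(a) * b`, used in the antipode axiom `m ∘ (S ⊗ id) ∘ Δ = 1·ε`. -/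
def antipL (s : A →ₗ[k] A) : TP2 k A →ₗ[k] A := mulA k A ∘ₗ TensorProduct.map s LinearMap.id

/-- `a ⊗ b ↦ a * S(b)`. -/
def antipR (s : A →ₗ[k] A) : TP2 k A →ₗ[k] A := mulA k A ∘ₗ TensorProduct.map LinearMap.id s

end Gadgets

/-- Central idempotent `e₀ = (1 + K²)/2`. -/
def e0 : Q := (2:ℂ)⁻¹ • (1 + gK ^ 2)

/-- Central idempotent `e₁ = (1 − K²)/2`. -/
def e1 : Q := (2:ℂ)⁻¹ • (1 - gK ^ 2)

/-- `f⁺ = −i F`. -/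
def fp : Q := (-Complex.I) • gF

/-- `f⁻ = E K⁻¹`. -/
def fm : Q := gE * gKi

/-- The Casimir element `C = FE − (i/4)(K − K⁻¹)`. -/
def Cas : Q := gF * gE - (Complex.I / 4) • (gK - gKi)

def t2 (a b : Q) : TP2 ℂ Q := a ⊗ₜ[ℂ] b

def t3 (a b c : Q) : TP3 ℂ Q := a ⊗ₜ[ℂ] (b ⊗ₜ[ℂ] c)

def eEF : Q := gE * gF
def eEK : Q := gE * gK
def eFK : Q := gF * gK
def eEFK : Q := gE * gF * gK

/-- `Φ^{010}` component of the coassociator. -/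
def Phi010 : TP3 ℂ Q :=
  t3 1 1 1 - (1 + Complex.I) • t3 gE gK gF + (1 - Complex.I) • t3 eFK gK eEK
    + (2:ℂ) • t3 eEFK 1 eEFK

/-- `Φ^{101}` component of the coassociator. -/
def Phi101 : TP3 ℂ Q :=
  (Complex.I - 1) • t3 1 gF eEK + t3 1 gK 1 + (2:ℂ) • t3 1 eEF eEFK
    - (1 + Complex.I) • t3 1 eEK gF - (1 + Complex.I) • t3 gE eFK 1
    + (2 * Complex.I) • t3 gE eEFK gF + (1 - Complex.I) • t3 eFK gE 1
    - (2 * Complex.I) • t3 eFK eEFK eEK - (2:ℂ) • t3 eEFK eEF 1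

/-- `Φ^{111}` component of the coassociator. -/
def Phi111 (β : ℂ) : TP3 ℂ Q :=
  (Complex.I * β ^ 2) • (
    (1 + Complex.I) • t3 1 gF eEK - t3 1 gK 1 - (2:ℂ) • t3 1 eEF 1
      - (2 * Complex.I) • t3 1 eEF eEFK + (1 + Complex.I) • t3 1 eEK gF
      - (1 + Complex.I) • t3 gE 1 gF + (1 + Complex.I) • t3 gE eFK 1
      + (2 * Complex.I) • t3 gE eFK eEFK + (2:ℂ) • t3 gE eEFK gF
      - (1 + Complex.I) • t3 eFK 1 eEK + (1 + Complex.I) • t3 eFK gE 1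
      + (2 * Complex.I) • t3 eFK gE eEFK + (2:ℂ) • t3 eFK eEFK eEK
      + (2 * Complex.I) • t3 eEFK gF eEK + (2 * Complex.I) • t3 eEFK gK eEFK
      - (2 * Complex.I) • t3 eEFK eEF 1 + (2 * Complex.I) • t3 eEFK eEK gF
      + (4:ℂ) • t3 eEFK eEF eEFK)

/-- The coassociator `Φ` of the quasi-Hopf algebra structure on `Q`. -/
def Phi (β : ℂ) : TP3 ℂ Q :=
  t3 e0 e0 e0 + t3 e1 e0 e0 + Phi010 * t3 e0 e1 e0 + t3 e0 e0 e1
    + t3 e1 e1 e0 + Phi101 * t3 e1 e0 e1 + t3 e0 e1 e1 + Phi111 β * t3 e1 e1 e1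

def R00 : TP2 ℂ Q :=
  (2:ℂ)⁻¹ • ((t2 1 1 + t2 1 gK + t2 gK 1 - t2 gK gK) * (t2 1 1 + (2 * Complex.I) • t2 gE gF))

def R01 : TP2 ℂ Q :=
  (2:ℂ)⁻¹ • ((t2 1 1 - Complex.I • t2 1 gK + t2 gK 1 + Complex.I • t2 gK gK) *
    (t2 1 1 + (1 - Complex.I) • t2 eFK eEK - (1 - Complex.I) • t2 gE gF
      + (1 + Complex.I) • t2 eEFK 1 + (2 * Complex.I) • t2 eEFK eEFK))

def R10 : TP2 ℂ Q :=
  (2:ℂ)⁻¹ • ((t2 1 1 + t2 1 gK - Complex.I • t2 gK 1 + Complex.I • t2 gK gK) *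
    (t2 1 gK + (1 - Complex.I) • t2 eFK gE + (1 - Complex.I) • t2 gE eFK
      - (1 - Complex.I) • t2 1 eEF - (2 * Complex.I) • t2 eEFK eEF))

def R11 (β : ℂ) : TP2 ℂ Q :=
  (β / 2) • ((t2 1 1 - Complex.I • t2 1 gK - Complex.I • t2 gK 1 + t2 gK gK) *
    ((-Complex.I) • t2 gK 1 + (2 * Complex.I) • t2 eEK gF + (1 - Complex.I) • t2 gK eEFK
      - (1 + Complex.I) • t2 eEF 1 - (2 * Complex.I) • t2 eEF eEFK))

/-- The universal R-matrix `R` of the quasi-triangular quasi-Hopf structure on `Q`. -/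
def Rmat (β : ℂ) : TP2 ℂ Q :=
  R00 * t2 e0 e0 + R01 * t2 e0 e1 + R10 * t2 e1 e0 + R11 β * t2 e1 e1

/-- The standard R-matrix `R_st` of the quotient `Q/(K²-1)`. -/
def Rst : TP2 ℂ Q :=
  (2:ℂ)⁻¹ • ∑ m ∈ Finset.range 2, ∑ n ∈ Finset.range 2,
    ((-1:ℂ) ^ (m * n)) • (t2 (gK ^ m) (gK ^ n) * (t2 1 1 + (2 * Complex.I) • t2 gE gF))

/-- The monodromy matrix `M = R₂₁ · R`. -/
def Mmat (β : ℂ) : TP2 ℂ Q := flipA ℂ Q (Rmat β) * Rmat β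

/-- The ribbon element `v = (e₀ − iβ K e₁)(1 − 2 f⁺ f⁻)`. -/
def vRib (β : ℂ) : Q := (e0 - (Complex.I * β) • (gK * e1)) * (1 - (2:ℂ) • (fp * fm))

/-- The coevaluation element `β = e₀ − 2iβ² C e₁`. -/
def bbEl (β : ℂ) : Q := e0 - (2 * Complex.I * β ^ 2) • (Cas * e1)

/-- `b ⊗ c ↦ S(b · bb · S(c))`, inner part of the Drinfeld element. -/
def uInner (S : Q →ₗ[ℂ] Q) (bb : Q) : TP2 ℂ Q →ₗ[ℂ] Q :=
  S ∘ₗ mulA ℂ Q ∘ₗ TensorProduct.map (LinearMap.mulRight ℂ bb) S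

/-- `Φ' ⊗ Φ'' ⊗ Φ''' ↦ S(Φ'' · bb · S(Φ''')) ⊗ Φ'`. -/
def uMap1 (S : Q →ₗ[ℂ] Q) (bb : Q) : TP3 ℂ Q →ₗ[ℂ] TP2 ℂ Q :=
  TensorProduct.map (uInner S bb) LinearMap.id ∘ₗ (TensorProduct.comm ℂ Q (TP2 ℂ Q)).toLinearMap

/-- `R' ⊗ R'' ↦ S(R'') · al · R'`. -/
def uMap2 (S : Q →ₗ[ℂ] Q) (al : Q) : TP2 ℂ Q →ₗ[ℂ] Q :=
  mulA ℂ Q ∘ₗ TensorProduct.map (LinearMap.mulRight ℂ al ∘ₗ S) LinearMap.id ∘ₗ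
    (TensorProduct.comm ℂ Q Q).toLinearMap

/-- `(x ⊗ a) ⊗ (R' ⊗ R'') ↦ x · (S(R'') · al · R') · a`. -/
def uBig (S : Q →ₗ[ℂ] Q) (al : Q) : TP2 ℂ Q ⊗[ℂ] TP2 ℂ Q →ₗ[ℂ] Q :=
  mulA ℂ Q ∘ₗ TensorProduct.map LinearMap.id (mulA ℂ Q ∘ₗ (TensorProduct.comm ℂ Q Q).toLinearMap)
    ∘ₗ (TensorProduct.assoc ℂ Q Q Q).toLinearMap ∘ₗ TensorProduct.map LinearMap.id (uMap2 S al)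

/-- The Drinfeld element `u = Σ S(Φ''·b·S(Φ'''))·S(R'')·α·R'·Φ'` (with `α = 1`). -/
def uDrin (β : ℂ) (S : Q →ₗ[ℂ] Q) : Q :=
  uBig S 1 (uMap1 S (bbEl β) (Phi β) ⊗ₜ[ℂ] Rmat β)

/-- The balancing element `g = b · S(α) · v⁻¹ · u` (with `α = 1`). -/
def balG (β : ℂ) (S : Q →ₗ[ℂ] Q) : Q :=
  bbEl β * S 1 * Ring.inverse (vRib β) * uDrin β S

/-- The cointegral `c = (β²/i)·E·F·(1 + K + K² + K³)`. -/
def cInt (β : ℂ) : Q := (β ^ 2 / Complex.I) • (gE * gF * (1 + gK + gK ^ 2 + gK ^ 3))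

/-- The q-trace of a one-dimensional representation, with balancing element `K⁻¹`. -/
def qTr1 (ρ : Q →ₐ[ℂ] ℂ) : Q →ₗ[ℂ] ℂ := ρ.toLinearMap ∘ₗ LinearMap.mulLeft ℂ gK

/-- The q-trace of a two-dimensional (matrix) representation, with balancing element `K⁻¹`. -/
def qTrM (ρ : Q →ₐ[ℂ] Matrix (Fin 2) (Fin 2) ℂ) : Q →ₗ[ℂ] ℂ :=
  Matrix.traceLinearMap (Fin 2) ℂ ℂ ∘ₗ ρ.toLinearMap ∘ₗ LinearMap.mulLeft ℂ gK

/-- The Drinfeld mapping `φ ↦ (φ ⊗ id)(M)`. -/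
def drinfeldImg (β : ℂ) (φ : Q →ₗ[ℂ] ℂ) : Q :=
  (TensorProduct.lid ℂ Q) (TensorProduct.map φ LinearMap.id (Mmat β))

/-!
Drinfeld's argument. Contracting two neighbouring tensor legs with `S(a') · a''` or
`a' · β · S(a'')` absorbs a coproduct sitting on those legs and leaves a counit behind. Applied to
`Σ S(Φ') Φ'' S(Φ''')`, this turns `(Δ ⊗ id) Δ(a) · Φ = Φ · (id ⊗ Δ) Δ(a)` into
`γ S(a) = S(a) γ`, so `β = γ⁻¹` commutes with `S(A)`, which settles every identity not involving
`Φ⁻¹`. For the last one, apply `a ⊗ b ⊗ c ⊗ d ↦ S(a) b β S(c) d` to the cocycle identity in the form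
`(Δ ⊗ id ⊗ id)(Φ⁻¹) · (Φ ⊗ 1) · (id ⊗ Δ ⊗ id)(Φ) = (id ⊗ id ⊗ Δ)(Φ) · (1 ⊗ Φ⁻¹)`: all three
coproducts are absorbed, because a cocycle counital in its middle leg is counital in the outer two,
and what remains equates the last two identities.
-/

section Bialgebra

open Coalgebra Bialgebra Algebra.TensorProduct

variable (R A : Type*) [CommSemiring R] [Semiring A] [Bialgebra R A]
  (B : Type*) [Semiring B] [Algebra R B]

/-- `Δ ⊗ id : A ⊗ B → A ⊗ (A ⊗ B)`, with the target bracketed to the right. -/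
def comulLeft : A ⊗[R] B →ₐ[R] A ⊗[R] (A ⊗[R] B) :=
  (Algebra.TensorProduct.assoc R R R A A B).toAlgHom.comp (map (comulAlgHom R A) (.id R B))

/-- `ε ⊗ id : A ⊗ B → B`. -/
def counitLeft : A ⊗[R] B →ₐ[R] B :=
  (Algebra.TensorProduct.lid R B).toAlgHom.comp (map (counitAlgHom R A) (.id R B))

/-- `id ⊗ ε : B ⊗ A → B`. -/
def counitRight : B ⊗[R] A →ₐ[R] B :=
  (Algebra.TensorProduct.rid R R B).toAlgHom.comp (map (.id R B) (counitAlgHom R A))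

variable {R A B}

lemma comulLeft_tmul (a : A) (b : B) :
    comulLeft R A B (a ⊗ₜ b) = Algebra.TensorProduct.assoc R R R A A B (comul a ⊗ₜ b) :=
  rfl

@[simp]
lemma counitLeft_tmul (a : A) (b : B) : counitLeft R A B (a ⊗ₜ b) = counit (R := R) a • b :=
  rfl

@[simp]
lemma counitRight_tmul (b : B) (a : A) : counitRight R A B (b ⊗ₜ a) = counit (R := R) a • b :=
  rfl

lemma counitLeft_comp_comulAlgHom : (counitLeft R A A).comp (comulAlgHom R A) = .id R A := by
  ext a
  change TensorProduct.lid R A ((counit (R := R)).rTensor A (comul a)) = a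
  simp

lemma counitRight_comp_comulAlgHom : (counitRight R A A).comp (comulAlgHom R A) = .id R A := by
  ext a
  change TensorProduct.rid R A ((counit (R := R)).lTensor A (comul a)) = a
  simp

lemma counitLeft_comp_map {C : Type*} [Semiring C] [Algebra R C] (f : B →ₐ[R] C) :
    (counitLeft R A C).comp (map (.id R A) f) = f.comp (counitLeft R A B) := by
  ext <;> simp

lemma counitLeft_comp_assoc {C : Type*} [Semiring C] [Algebra R C] :
    (counitLeft R A (B ⊗[R] C)).comp (Algebra.TensorProduct.assoc R R R A B C).toAlgHom =
      map (counitLeft R A B) (.id R C) := by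
  ext <;> simp [Algebra.TensorProduct.one_def]

lemma map_counitLeft_comp_assoc {C : Type*} [Semiring C] [Algebra R C] :
    (map (.id R B) (counitLeft R A C)).comp (Algebra.TensorProduct.assoc R R R B A C).toAlgHom =
      map (counitRight R A B) (.id R C) := by
  ext <;> simp [Algebra.TensorProduct.one_def]

lemma map_map_comp_comulLeft {C : Type*} [Semiring C] [Algebra R C] (f : B →ₐ[R] C) :
    (map (.id R A) (map (.id R A) f)).comp (comulLeft R A B) =
      (comulLeft R A C).comp (map (.id R A) f) := by
  have assoc_natural : (map (.id R A) (map (.id R A) f)).comp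
      (Algebra.TensorProduct.assoc R R R A A B).toAlgHom =
        (Algebra.TensorProduct.assoc R R R A A C).toAlgHom.comp (map (.id R (A ⊗[R] A)) f) := by
    ext <;> simp [Algebra.TensorProduct.one_def]
  rw [comulLeft, ← AlgHom.comp_assoc, assoc_natural, comulLeft, AlgHom.comp_assoc,
    AlgHom.comp_assoc, ← Algebra.TensorProduct.map_comp, ← Algebra.TensorProduct.map_comp]
  simp only [AlgHom.id_comp, AlgHom.comp_id]

lemma counitLeft_comp_comulLeft : (counitLeft R A (A ⊗[R] B)).comp (comulLeft R A B) = .id R _ := by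
  rw [comulLeft, ← AlgHom.comp_assoc, counitLeft_comp_assoc, ← Algebra.TensorProduct.map_comp,
    counitLeft_comp_comulAlgHom, AlgHom.comp_id, Algebra.TensorProduct.map_id]

lemma map_counitLeft_comp_comulLeft :
    (map (.id R A) (counitLeft R A B)).comp (comulLeft R A B) = .id R _ := by
  rw [comulLeft, ← AlgHom.comp_assoc, map_counitLeft_comp_assoc, ← Algebra.TensorProduct.map_comp,
    counitRight_comp_comulAlgHom, AlgHom.comp_id, Algebra.TensorProduct.map_id]

lemma counitLeft_comp_includeLeft :
    (counitLeft R A B).comp includeLeft = (Algebra.ofId R B).comp (counitAlgHom R A) := by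
  ext; simp [Algebra.ofId_apply, Algebra.algebraMap_eq_smul_one]

lemma map_ofId_comp_counitAlgHom {C : Type*} [Semiring C] [Algebra R C] :
    map (.id R B) ((Algebra.ofId R C).comp (counitAlgHom R A)) =
      includeLeft.comp (counitRight R A B) := by
  ext <;> simp [Algebra.ofId_apply, Algebra.algebraMap_eq_smul_one]

/-- A counital 3-cocycle: `(id ⊗ ε ⊗ id)(Φ) = 1` and
`(Δ ⊗ id ⊗ id)(Φ) · (id ⊗ id ⊗ Δ)(Φ) = (Φ ⊗ 1) · (id ⊗ Δ ⊗ id)(Φ) · (1 ⊗ Φ)`. -/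
structure IsCounitalCocycle (Φ : A ⊗[R] (A ⊗[R] A)) : Prop where
  counit_middle : map (.id R A) (counitLeft R A A) Φ = 1
  cocycle : comulLeft R A (A ⊗[R] A) Φ * map (.id R A) (map (.id R A) (comulAlgHom R A)) Φ =
    map (.id R A) (map (.id R A) includeLeft) Φ * map (.id R A) (comulLeft R A A) Φ * (1 ⊗ₜ Φ)

namespace IsCounitalCocycle

variable {Φ : A ⊗[R] (A ⊗[R] A)}

lemma counitLeft_eq_one (h : IsCounitalCocycle Φ) (hΦ : IsUnit Φ) :
    counitLeft R A (A ⊗[R] A) Φ = 1 := by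
  have h_comul_third : map (.id R A) (counitLeft R A (A ⊗[R] A))
      (map (.id R A) (map (.id R A) (comulAlgHom R A)) Φ) = 1 := by
    rw [← AlgHom.comp_apply, ← map_id_comp, counitLeft_comp_map, map_id_comp, AlgHom.comp_apply,
      h.counit_middle, map_one]
  have h_pad : map (.id R A) (counitLeft R A (A ⊗[R] A))
      (map (.id R A) (map (.id R A) includeLeft) Φ) = 1 := by
    rw [← AlgHom.comp_apply, ← map_id_comp, counitLeft_comp_map, map_id_comp, AlgHom.comp_apply,
      h.counit_middle, map_one]
  have h_comul_first : map (.id R A) (counitLeft R A (A ⊗[R] A))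
      (comulLeft R A (A ⊗[R] A) Φ) = Φ :=
    DFunLike.congr_fun map_counitLeft_comp_comulLeft Φ
  have h_comul_second : map (.id R A) (counitLeft R A (A ⊗[R] A))
      (map (.id R A) (comulLeft R A A) Φ) = Φ := by
    rw [← AlgHom.comp_apply, ← map_id_comp, counitLeft_comp_comulLeft,
      Algebra.TensorProduct.map_id, AlgHom.id_apply]
  have h_cocycle := congrArg (map (.id R A) (counitLeft R A (A ⊗[R] A))) h.cocycle
  rw [map_mul, map_mul, map_mul, h_comul_first, h_comul_third, h_pad, h_comul_second, one_mul,
    mul_one, eq_comm, hΦ.mul_eq_left] at h_cocycle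
  simpa using congrArg (counitLeft R A (A ⊗[R] A)) h_cocycle

lemma map_counitRight_eq_one (h : IsCounitalCocycle Φ) (hΦ : IsUnit Φ) :
    map (.id R A) (counitRight R A A) Φ = 1 := by
  have h_comul_first : map (.id R A) (map (.id R A) (counitLeft R A A))
      (comulLeft R A (A ⊗[R] A) Φ) = 1 := by
    rw [← AlgHom.comp_apply, map_map_comp_comulLeft, AlgHom.comp_apply, h.counit_middle, map_one]
  have h_comul_third : map (.id R A) (map (.id R A) (counitLeft R A A))
      (map (.id R A) (map (.id R A) (comulAlgHom R A)) Φ) = Φ := by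
    rw [← AlgHom.comp_apply, ← map_id_comp, ← map_id_comp, counitLeft_comp_comulAlgHom,
      Algebra.TensorProduct.map_id, Algebra.TensorProduct.map_id, AlgHom.id_apply]
  have h_pad : map (.id R A) (map (.id R A) (counitLeft R A A))
      (map (.id R A) (map (.id R A) includeLeft) Φ) =
        map (.id R A) includeLeft (map (.id R A) (counitRight R A A) Φ) := by
    rw [← AlgHom.comp_apply, ← map_id_comp, ← map_id_comp, counitLeft_comp_includeLeft,
      map_ofId_comp_counitAlgHom, map_id_comp, AlgHom.comp_apply]
  have h_comul_second : map (.id R A) (map (.id R A) (counitLeft R A A))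
      (map (.id R A) (comulLeft R A A) Φ) = Φ := by
    rw [← AlgHom.comp_apply, ← map_id_comp, map_counitLeft_comp_comulLeft,
      Algebra.TensorProduct.map_id, AlgHom.id_apply]
  have h_cocycle := congrArg (map (.id R A) (map (.id R A) (counitLeft R A A))) h.cocycle
  rw [map_mul, map_mul, map_mul, h_comul_first, h_comul_third, h_pad, h_comul_second,
    Algebra.TensorProduct.map_tmul, h.counit_middle, map_one, ← Algebra.TensorProduct.one_def,
    one_mul, mul_one, eq_comm, hΦ.mul_eq_right] at h_cocycle
  have h_retract : (map (.id R A) (counitRight R A A)).comp (map (.id R A) includeLeft) =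
      .id R (A ⊗[R] A) := by
    ext <;> simp
  rw [← AlgHom.id_apply (R := R) (map (.id R A) (counitRight R A A) Φ), ← h_retract,
    AlgHom.comp_apply, h_cocycle, map_one]

end IsCounitalCocycle

end Bialgebra

section MulMap

open Algebra.TensorProduct

variable {R A B C D : Type*} [CommSemiring R] [Semiring A] [Algebra R A]

section Module

variable [AddCommMonoid B] [Module R B] [AddCommMonoid C] [Module R C]

/-- `b ⊗ c ↦ f(b) · g(c)`. -/
def mulMap (f : B →ₗ[R] A) (g : C →ₗ[R] A) : B ⊗[R] C →ₗ[R] A :=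
  LinearMap.mul' R A ∘ₗ TensorProduct.map f g

@[simp]
lemma mulMap_tmul (f : B →ₗ[R] A) (g : C →ₗ[R] A) (b : B) (c : C) :
    mulMap f g (b ⊗ₜ c) = f b * g c :=
  rfl

lemma mulMap_mulLeft_comp (r : A) (f : B →ₗ[R] A) (g : C →ₗ[R] A) :
    mulMap (LinearMap.mulLeft R r ∘ₗ f) g = LinearMap.mulLeft R r ∘ₗ mulMap f g := by
  ext; simp [mul_assoc]

lemma mulMap_mulRight_comp (r : A) (f : B →ₗ[R] A) (g : C →ₗ[R] A) :
    mulMap f (LinearMap.mulRight R r ∘ₗ g) = LinearMap.mulRight R r ∘ₗ mulMap f g := by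
  ext; simp [mul_assoc]

end Module

variable [Semiring B] [Algebra R B] [Semiring C] [Algebra R C] [Semiring D] [Algebra R D]

lemma mulMap_map_mul_congr {f : B →ₗ[R] A} {φ : D →ₗ[R] A} {g h : C →ₐ[R] D}
    (hφ : ∀ c d, φ (g c * d) = φ (h c * d)) (x : B ⊗[R] C) (w : B ⊗[R] D) :
    mulMap f φ (map (.id R B) g x * w) = mulMap f φ (map (.id R B) h x * w) := by
  induction x with
  | zero => simp only [map_zero, zero_mul]
  | add x y hx hy => simp only [map_add, add_mul, hx, hy]
  | tmul b c =>
    induction w with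
    | zero => simp only [mul_zero]
    | add v w hv hw => simp only [map_add, mul_add, hv, hw]
    | tmul b' d => simp [hφ]

lemma mulMap_mul_map_congr {f : B →ₗ[R] A} {φ : D →ₗ[R] A} {g h : C →ₐ[R] D}
    (hφ : ∀ d c, φ (d * g c) = φ (d * h c)) (w : B ⊗[R] D) (x : B ⊗[R] C) :
    mulMap f φ (w * map (.id R B) g x) = mulMap f φ (w * map (.id R B) h x) := by
  induction x with
  | zero => simp only [map_zero, mul_zero]
  | add x y hx hy => simp only [map_add, mul_add, hx, hy]
  | tmul b c =>
    induction w with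
    | zero => simp only [zero_mul]
    | add v w hv hw => simp only [map_add, add_mul, hv, hw]
    | tmul b' d => simp [hφ]

lemma mulMap_one_tmul_mul {φ : C →ₗ[R] A} {c : C} {r : A} (hφ : ∀ c', φ (c * c') = φ c' * r)
    (f : B →ₗ[R] A) (w : B ⊗[R] C) : mulMap f φ (1 ⊗ₜ c * w) = mulMap f φ w * r := by
  induction w with
  | zero => simp
  | add v w hv hw => simp only [map_add, mul_add, add_mul, hv, hw]
  | tmul b c' => simp [hφ, mul_assoc]

lemma mulMap_mul_tmul_one {f : B →ₗ[R] A} {b : B} {r : A} (hf : ∀ b', f (b' * b) = r * f b')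
    (φ : C →ₗ[R] A) (w : B ⊗[R] C) : mulMap f φ (w * b ⊗ₜ 1) = r * mulMap f φ w := by
  induction w with
  | zero => simp
  | add v w hv hw => simp only [map_add, mul_add, add_mul, hv, hw]
  | tmul b' c => simp [hf, mul_assoc]

end MulMap

section HopfAlgebra

open Coalgebra Bialgebra Algebra.TensorProduct HopfAlgebra

variable {R A B : Type*} [CommSemiring R] [Semiring A] [HopfAlgebra R A]

lemma mulMap_antipode_id_comul (a : A) :
    mulMap (antipode R) .id (comul (R := R) a) = counit (R := R) a • (1 : A) :=
  (mul_antipode_rTensor_comul_apply a).trans (Algebra.algebraMap_eq_smul_one _)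

lemma mulMap_id_antipode_comul (a : A) :
    mulMap .id (antipode R) (comul (R := R) a) = counit (R := R) a • (1 : A) :=
  (mul_antipode_lTensor_comul_apply a).trans (Algebra.algebraMap_eq_smul_one _)

lemma mulMap_antipode_id_mul_tmul (X : A ⊗[R] A) (b c : A) :
    mulMap (antipode R) .id (X * b ⊗ₜ c) = antipode R b * mulMap (antipode R) .id X * c := by
  induction X with
  | zero => simp
  | add X Y hX hY => simp only [add_mul, mul_add, map_add, hX, hY]
  | tmul x y => simp [antipode_mul_antidistrib, mul_assoc]

lemma mulMap_id_antipode_tmul_mul (b c : A) (X : A ⊗[R] A) :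
    mulMap .id (antipode R) (b ⊗ₜ c * X) = b * mulMap .id (antipode R) X * antipode R c := by
  induction X with
  | zero => simp
  | add X Y hX hY => simp only [add_mul, mul_add, map_add, hX, hY]
  | tmul x y => simp [antipode_mul_antidistrib, mul_assoc]

lemma mulMap_antipode_id_comul_mul (a : A) (X : A ⊗[R] A) :
    mulMap (antipode R) .id (comul a * X) = counit (R := R) a • mulMap (antipode R) .id X := by
  induction X with
  | zero => simp
  | add X Y hX hY => simp only [mul_add, map_add, smul_add, hX, hY]
  | tmul x y => simp [mulMap_antipode_id_mul_tmul, mulMap_antipode_id_comul]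

lemma mulMap_id_antipode_mul_comul (X : A ⊗[R] A) (a : A) :
    mulMap .id (antipode R) (X * comul a) = counit (R := R) a • mulMap .id (antipode R) X := by
  induction X with
  | zero => simp
  | add X Y hX hY => simp only [add_mul, map_add, smul_add, hX, hY]
  | tmul x y => simp [mulMap_id_antipode_tmul_mul, mulMap_id_antipode_comul]

section Contraction

variable [Semiring B] [Algebra R B]

lemma mulMap_mulMap_assoc_tmul (f g : A →ₗ[R] A) (φ : B →ₗ[R] A) (X : A ⊗[R] A) (z : B) :
    mulMap f (mulMap g φ) (Algebra.TensorProduct.assoc R R R A A B (X ⊗ₜ z)) =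
      mulMap f g X * φ z := by
  induction X with
  | zero => simp
  | add X Y hX hY => simp only [add_tmul, add_mul, map_add, hX, hY]
  | tmul x y => simp [mul_assoc]

lemma mulMap_antipode_comulLeft_mul (φ : B →ₗ[R] A) (x : A ⊗[R] B) (w : A ⊗[R] (A ⊗[R] B)) :
    mulMap (antipode R) (mulMap .id φ) (comulLeft R A B x * w) =
      mulMap (antipode R) (mulMap .id φ) (1 ⊗ₜ (1 ⊗ₜ counitLeft R A B x) * w) := by
  obtain ⟨w, rfl⟩ := (Algebra.TensorProduct.assoc R R R A A B).surjective w
  induction w with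
  | zero => simp only [map_zero, mul_zero]
  | add v w hv hw => simp only [map_add, mul_add, hv, hw]
  | tmul X z =>
    induction x with
    | zero => simp only [map_zero, tmul_zero, zero_mul]
    | add x y hx hy => simp only [map_add, tmul_add, add_mul, hx, hy]
    | tmul a b =>
      have h_counit : 1 ⊗ₜ (1 ⊗ₜ counitLeft R A B (a ⊗ₜ b)) =
          Algebra.TensorProduct.assoc R R R A A B (1 ⊗ₜ (counit (R := R) a • b)) := rfl
      rw [comulLeft_tmul, h_counit, ← map_mul, ← map_mul, tmul_mul_tmul, tmul_mul_tmul,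
        mulMap_mulMap_assoc_tmul, mulMap_mulMap_assoc_tmul, mulMap_antipode_id_comul_mul, one_mul,
        smul_mul_assoc, smul_mul_assoc, map_smul, mul_smul_comm]

lemma mulMap_id_antipode_mul_comulLeft (φ : B →ₗ[R] A) (w : A ⊗[R] (A ⊗[R] B)) (x : A ⊗[R] B) :
    mulMap .id (mulMap (antipode R) φ) (w * comulLeft R A B x) =
      mulMap .id (mulMap (antipode R) φ) (w * 1 ⊗ₜ (1 ⊗ₜ counitLeft R A B x)) := by
  obtain ⟨w, rfl⟩ := (Algebra.TensorProduct.assoc R R R A A B).surjective w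
  induction w with
  | zero => simp only [map_zero, zero_mul]
  | add v w hv hw => simp only [map_add, add_mul, hv, hw]
  | tmul X z =>
    induction x with
    | zero => simp only [map_zero, tmul_zero, mul_zero]
    | add x y hx hy => simp only [map_add, tmul_add, mul_add, hx, hy]
    | tmul a b =>
      have h_counit : 1 ⊗ₜ (1 ⊗ₜ counitLeft R A B (a ⊗ₜ b)) =
          Algebra.TensorProduct.assoc R R R A A B (1 ⊗ₜ (counit (R := R) a • b)) := rfl
      rw [comulLeft_tmul, h_counit, ← map_mul, ← map_mul, tmul_mul_tmul, tmul_mul_tmul,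
        mulMap_mulMap_assoc_tmul, mulMap_mulMap_assoc_tmul, mulMap_id_antipode_mul_comul, mul_one,
        mul_smul_comm, smul_mul_assoc, map_smul, mul_smul_comm]

end Contraction

/-- The element `γ = Σ S(Φ') · Φ'' · S(Φ''')` attached to `Φ = Σ Φ' ⊗ Φ'' ⊗ Φ'''`; its inverse is
the `β` of the quasi-Hopf structure. -/
def gammaElement (Φ : A ⊗[R] (A ⊗[R] A)) : A :=
  mulMap (antipode R) (mulMap .id (antipode R)) Φ

lemma commute_gammaElement_antipode {Φ : A ⊗[R] (A ⊗[R] A)}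
    (hcomul : ∀ a : A,
      comulLeft R A A (comul a) * Φ = Φ * map (.id R A) (comulAlgHom R A) (comul a)) (a : A) :
    Commute (gammaElement Φ) (antipode R a) := by
  have h_left : gammaElement (comulLeft R A A (comul a) * Φ) = gammaElement Φ * antipode R a := by
    have h_counit : counitLeft R A A (comul a) = a :=
      DFunLike.congr_fun counitLeft_comp_comulAlgHom a
    rw [gammaElement, mulMap_antipode_comulLeft_mul, h_counit]
    exact mulMap_one_tmul_mul
      (mulMap_one_tmul_mul (fun c ↦ antipode_mul_antidistrib a c) _) _ _
  have h_right : gammaElement (Φ * map (.id R A) (comulAlgHom R A) (comul a)) =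
      antipode R a * gammaElement Φ := by
    have h_counit : counitRight R A A (comul a) = a :=
      DFunLike.congr_fun counitRight_comp_comulAlgHom a
    rw [gammaElement, mulMap_mul_map_congr
        (h := (Algebra.ofId R (A ⊗[R] A)).comp (counitAlgHom R A)) fun X c ↦ ?_,
      map_ofId_comp_counitAlgHom, AlgHom.comp_apply, h_counit]
    · exact mulMap_mul_tmul_one (fun b ↦ antipode_mul_antidistrib b a) _ _
    · rw [comulAlgHom_apply, mulMap_id_antipode_mul_comul]
      simp [Algebra.ofId_apply, Algebra.algebraMap_eq_smul_one]
  rw [commute_iff_eq, ← h_left, hcomul, h_right]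

/-- `a ⊗ b ⊗ c ⊗ d ↦ S(a) · b · β · S(c) · d`, to be applied to both sides of the cocycle
identity. -/
def contraction (β : A) : A ⊗[R] (A ⊗[R] (A ⊗[R] A)) →ₗ[R] A :=
  mulMap (antipode R) (mulMap .id (mulMap (LinearMap.mulLeft R β ∘ₗ antipode R) .id))

lemma contraction_comulLeft_mul (β : A) {x : A ⊗[R] (A ⊗[R] A)}
    (hx : counitLeft R A (A ⊗[R] A) x = 1) (w : A ⊗[R] (A ⊗[R] (A ⊗[R] A))) :
    contraction β (comulLeft R A (A ⊗[R] A) x * w) = contraction β w := by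
  rw [contraction, mulMap_antipode_comulLeft_mul, hx, ← Algebra.TensorProduct.one_def,
    ← Algebra.TensorProduct.one_def, one_mul]

lemma contraction_map_map_comul_mul (β : A) {x : A ⊗[R] (A ⊗[R] A)}
    (hx : map (.id R A) (counitRight R A A) x = 1) (w : A ⊗[R] (A ⊗[R] (A ⊗[R] A))) :
    contraction β (map (.id R A) (map (.id R A) (comulAlgHom R A)) x * w) = contraction β w := by
  rw [contraction, mulMap_map_mul_congr (mulMap_map_mul_congr (g := comulAlgHom R A)
      (h := (Algebra.ofId R (A ⊗[R] A)).comp (counitAlgHom R A)) fun c X ↦ ?_),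
    map_ofId_comp_counitAlgHom, map_id_comp, AlgHom.comp_apply, hx, map_one, one_mul]
  rw [mulMap_mulLeft_comp, LinearMap.comp_apply, comulAlgHom_apply, mulMap_antipode_id_comul_mul]
  simp [Algebra.ofId_apply, Algebra.algebraMap_eq_smul_one]

lemma contraction_map_map_includeLeft (β : A) (x : A ⊗[R] (A ⊗[R] A)) :
    contraction β (map (.id R A) (map (.id R A) includeLeft) x) =
      mulMap (antipode R) (mulMap .id (LinearMap.mulLeft R β ∘ₗ antipode R)) x := by
  suffices contraction β ∘ₗ (map (.id R A) (map (.id R A) includeLeft)).toLinearMap =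
      mulMap (antipode R) (mulMap .id (LinearMap.mulLeft R β ∘ₗ antipode R)) from
    LinearMap.congr_fun this x
  ext; simp [contraction]

lemma contraction_one_tmul (β : A) (x : A ⊗[R] (A ⊗[R] A)) :
    contraction β (1 ⊗ₜ x) = mulMap .id (mulMap (LinearMap.mulLeft R β ∘ₗ antipode R) .id) x := by
  rw [contraction, mulMap_tmul, antipode_one, one_mul]

section CommutingElement

variable {β : A} (hβ : ∀ a : A, Commute β (antipode R a))

include hβ

lemma mulLeft_comp_antipode :
    LinearMap.mulLeft R β ∘ₗ antipode R = LinearMap.mulRight R β ∘ₗ antipode R :=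
  LinearMap.ext hβ

lemma mulMap_id_mulLeft_antipode_comul (a : A) :
    mulMap .id (LinearMap.mulLeft R β ∘ₗ antipode R) (comul a) = counit (R := R) a • β := by
  rw [mulLeft_comp_antipode hβ, mulMap_mulRight_comp, LinearMap.comp_apply,
    mulMap_id_antipode_comul, LinearMap.mulRight_apply, smul_one_mul]

lemma mulMap_mulLeft_antipode_eq_gammaElement_mul (Φ : A ⊗[R] (A ⊗[R] A)) :
    mulMap (antipode R) (mulMap .id (LinearMap.mulLeft R β ∘ₗ antipode R)) Φ =
      gammaElement Φ * β := by
  rw [mulLeft_comp_antipode hβ, mulMap_mulRight_comp, mulMap_mulRight_comp]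
  rfl

lemma contraction_mul_map_comulLeft {x : A ⊗[R] (A ⊗[R] A)}
    (hx : map (.id R A) (counitLeft R A A) x = 1) (w : A ⊗[R] (A ⊗[R] (A ⊗[R] A))) :
    contraction β (w * map (.id R A) (comulLeft R A A) x) = contraction β w := by
  have h_move : mulMap (LinearMap.mulLeft R β ∘ₗ antipode R) .id =
      mulMap (antipode R) (LinearMap.mulLeft R β) := by
    ext; simp [(hβ _).eq, mul_assoc]
  rw [contraction, h_move, mulMap_mul_map_congr (h := includeRight.comp (includeRight.comp
      (counitLeft R A A))) (mulMap_id_antipode_mul_comulLeft _), map_id_comp, map_id_comp,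
    AlgHom.comp_apply, AlgHom.comp_apply, hx, map_one, map_one, mul_one]

lemma IsCounitalCocycle.mulMap_inverse_eq {Φ : A ⊗[R] (A ⊗[R] A)} (h : IsCounitalCocycle Φ)
    (hΦ : IsUnit Φ) :
    mulMap .id (mulMap (LinearMap.mulLeft R β ∘ₗ antipode R) .id) (Ring.inverse Φ) =
      mulMap (antipode R) (mulMap .id (LinearMap.mulLeft R β ∘ₗ antipode R)) Φ := by
  have h_inverse_mul : Ring.inverse Φ * Φ = 1 := Ring.inverse_mul_cancel Φ hΦ
  have h_mul_inverse : Φ * Ring.inverse Φ = 1 := Ring.mul_inverse_cancel Φ hΦ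
  have h_rearranged : map (.id R A) (map (.id R A) (comulAlgHom R A)) Φ * 1 ⊗ₜ Ring.inverse Φ =
      comulLeft R A (A ⊗[R] A) (Ring.inverse Φ) *
        (map (.id R A) (map (.id R A) includeLeft) Φ * map (.id R A) (comulLeft R A A) Φ) := by
    calc
      _ = comulLeft R A (A ⊗[R] A) (Ring.inverse Φ) * (comulLeft R A (A ⊗[R] A) Φ *
          map (.id R A) (map (.id R A) (comulAlgHom R A)) Φ) * 1 ⊗ₜ Ring.inverse Φ := by
        rw [← mul_assoc, ← map_mul, h_inverse_mul, map_one, one_mul]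
      _ = _ := by
        rw [h.cocycle, mul_assoc, mul_assoc (_ * _), tmul_mul_tmul, h_mul_inverse, one_mul,
          ← Algebra.TensorProduct.one_def, mul_one]
  have h_counit_inverse : counitLeft R A (A ⊗[R] A) (Ring.inverse Φ) = 1 := by
    simpa [h.counitLeft_eq_one hΦ] using congrArg (counitLeft R A (A ⊗[R] A)) h_inverse_mul
  calc
    _ = contraction β (1 ⊗ₜ Ring.inverse Φ) := (contraction_one_tmul β _).symm
    _ = contraction β (map (.id R A) (map (.id R A) includeLeft) Φ) := by
      rw [← contraction_map_map_comul_mul β (h.map_counitRight_eq_one hΦ), h_rearranged,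
        contraction_comulLeft_mul β h_counit_inverse,
        contraction_mul_map_comulLeft hβ h.counit_middle]
    _ = _ := contraction_map_map_includeLeft β Φ

end CommutingElement

theorem statement14_general {Φ : A ⊗[R] (A ⊗[R] A)} (hΦ : IsUnit Φ)
    (hcocycle : IsCounitalCocycle Φ)
    (hcomul : ∀ a : A, comulLeft R A A (comul a) =
      Φ * map (.id R A) (comulAlgHom R A) (comul a) * Ring.inverse Φ)
    (hγ : IsUnit (gammaElement Φ)) :
    (∀ a : A, mulMap .id (LinearMap.mulLeft R (Ring.inverse (gammaElement Φ)) ∘ₗ antipode R)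
      (comul a) = counit (R := R) a • Ring.inverse (gammaElement Φ)) ∧
    mulMap (antipode R) (mulMap .id
      (LinearMap.mulLeft R (Ring.inverse (gammaElement Φ)) ∘ₗ antipode R)) Φ = 1 ∧
    mulMap .id (mulMap (LinearMap.mulLeft R (Ring.inverse (gammaElement Φ)) ∘ₗ antipode R) .id)
      (Ring.inverse Φ) = 1 := by
  have hcomul' (a : A) :
      comulLeft R A A (comul a) * Φ = Φ * map (.id R A) (comulAlgHom R A) (comul a) := by
    rw [hcomul, mul_assoc, Ring.inverse_mul_cancel _ hΦ, mul_one]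
  have hβ (a : A) : Commute (Ring.inverse (gammaElement Φ)) (antipode R a) := by
    obtain ⟨γ, hγ_eq⟩ := hγ
    rw [← hγ_eq, Ring.inverse_unit, Commute.units_inv_left_iff, hγ_eq]
    exact commute_gammaElement_antipode hcomul' a
  have hγβ : mulMap (antipode R) (mulMap .id
      (LinearMap.mulLeft R (Ring.inverse (gammaElement Φ)) ∘ₗ antipode R)) Φ = 1 := by
    rw [mulMap_mulLeft_antipode_eq_gammaElement_mul hβ, Ring.mul_inverse_cancel _ hγ]
  exact ⟨mulMap_id_mulLeft_antipode_comul hβ, hγβ,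
    (hcocycle.mulMap_inverse_eq hβ hΦ).trans hγβ⟩

end HopfAlgebra

/-- The Hopf algebra bundling an explicitly given comultiplication, counit and antipode, with the
axioms in the form in which `statement14` assumes them. -/
abbrev hopfAlgebraOfMaps {k A : Type} [Field k] [Ring A] [Algebra k A]
    (Δ : A →ₐ[k] TP2 k A) (ce : A →ₐ[k] k)
    (hco : ∀ a : A, copL Δ (Δ a) = copR Δ (Δ a))
    (hcuL : ∀ a : A, cuL ce (Δ a) = a) (hcuR : ∀ a : A, cuR ce (Δ a) = a)
    (S : A →ₗ[k] A)
    (hSL : ∀ a : A, antipL S (Δ a) = ce a • (1 : A))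
    (hSR : ∀ a : A, antipR S (Δ a) = ce a • (1 : A)) : HopfAlgebra k A where
  __ := Bialgebra.ofAlgHom Δ ce (AlgHom.ext hco)
    (AlgHom.ext fun a ↦ (TensorProduct.lid k A).injective <| (hcuL a).trans (by simp))
    (AlgHom.ext fun a ↦ (TensorProduct.rid k A).injective <| (hcuR a).trans (by simp))
  antipode := S
  mul_antipode_rTensor_comul := LinearMap.ext fun a ↦
    (hSL a).trans (Algebra.algebraMap_eq_smul_one _).symm
  mul_antipode_lTensor_comul := LinearMap.ext fun a ↦
    (hSR a).trans (Algebra.algebraMap_eq_smul_one _).symm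

/-- for a Hopf algebra `A` with a counital invertible 3-cocycle `Φ`
intertwining the iterated coproducts, if `γ = Σ S(Φ')·Φ''·S(Φ''')` is invertible,
then `(A, Φ, S, α = 1, β = γ⁻¹)` is a quasi-Hopf algebra. -/
theorem statement14 (k : Type) [Field k] (A : Type) [Ring A] [Algebra k A]
    (Δ : A →ₐ[k] TP2 k A) (ce : A →ₐ[k] k)
    (hco : ∀ a : A, copL Δ (Δ a) = copR Δ (Δ a))
    (hcuL : ∀ a : A, cuL ce (Δ a) = a) (hcuR : ∀ a : A, cuR ce (Δ a) = a)
    (S : A →ₗ[k] A)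
    (hSL : ∀ a : A, antipL S (Δ a) = ce a • (1:A))
    (hSR : ∀ a : A, antipR S (Δ a) = ce a • (1:A))
    (Φ : TP3 k A) (hΦ : IsUnit Φ) (hΦcu : cuMid ce Φ = 1)
    (hint : ∀ a : A, copL Δ (Δ a) = Φ * copR Δ (Δ a) * Ring.inverse Φ)
    (hcoc : cop4_1 Δ Φ * cop4_3 Δ Φ = pad4 Φ * cop4_2 Δ Φ * ((1:A) ⊗ₜ[k] Φ))
    (hγ : IsUnit (tmap3 S LinearMap.id S Φ)) :
    (∀ a : A, antipL S (Δ a) = ce a • (1:A)) ∧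
    (∀ a : A,
      antipR (LinearMap.mulLeft k (Ring.inverse (tmap3 S LinearMap.id S Φ)) ∘ₗ S) (Δ a) =
        ce a • Ring.inverse (tmap3 S LinearMap.id S Φ)) ∧
    tmap3 S LinearMap.id
      (LinearMap.mulLeft k (Ring.inverse (tmap3 S LinearMap.id S Φ)) ∘ₗ S) Φ = 1 ∧
    tmap3 LinearMap.id
      (LinearMap.mulLeft k (Ring.inverse (tmap3 S LinearMap.id S Φ)) ∘ₗ S) LinearMap.id
      (Ring.inverse Φ) = 1 := by
  let := hopfAlgebraOfMaps Δ ce hco hcuL hcuR S hSL hSR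
  exact ⟨hSL, statement14_general hΦ ⟨hΦcu, hcoc⟩ hint hγ⟩
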